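/- arXiv:1006.2570 — 2 statements merged into one kernel-verified Lean document; each statement's English description precedes it below -/
import Mathlib

section
/- For every i ∈ ℕ, the number N_i = (4^{i+1} − 1)/3 satisfies N_i = ∑_{j=0}^{i} 2^{2j}; this binary sum is compact, and consequently every binary sum with value N_i (coefficients in {−1, 1}, exponents in ℕ, repetitions allowed) has at least i + 1 terms. -/
/-!
A compact binary sum has the least number of terms among all binary sums with the same value,
because a sum can be halved without gaining terms: if `N` has a sum with `k` terms and `M` is
`N / 2`, rounded either way if `N` is odd, then `M` has a sum with at most `k` terms. If
`N = 4 * n ± 1`, any sum for `N` has a term `±1`; deleting it leaves `4 * n` or `4 * n ± 2`, and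
halving twice gives a sum for `n` with fewer terms. The last term `± 2 ^ q` of a compact sum can be
split off in this way, since the rest of the sum is divisible by `2 ^ (q + 2)`.
-/

/-- A binary sum, as a list of (coefficient, exponent) pairs; its value. -/
def binVal (l : List (ℤ × ℕ)) : ℤ := (l.map fun p => p.1 * 2 ^ p.2).sum

/-- All coefficients belong to `{-1, 1}`. -/
def GoodCoeffs (l : List (ℤ × ℕ)) : Prop := ∀ p ∈ l, p.1 = 1 ∨ p.1 = -1

/-- A binary sum is compact if its exponents are strictly decreasing with consecutive
gaps at least 2. -/
def Compact (l : List (ℤ × ℕ)) : Prop := l.Chain' fun a b => b.2 + 2 ≤ a.2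

theorem binVal_cons (p : ℤ × ℕ) (l : List (ℤ × ℕ)) :
    binVal (p :: l) = p.1 * 2 ^ p.2 + binVal l := by
  simp [binVal]

theorem binVal_concat (l : List (ℤ × ℕ)) (p : ℤ × ℕ) :
    binVal (l ++ [p]) = binVal l + p.1 * 2 ^ p.2 := by
  simp [binVal]

theorem add_binVal_erase {l : List (ℤ × ℕ)} {p : ℤ × ℕ} (hp : p ∈ l) :
    p.1 * 2 ^ p.2 + binVal (l.erase p) = binVal l := by
  rw [← binVal_cons]
  exact ((List.perm_cons_erase hp).symm.map _).sum_eq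

theorem two_pow_dvd_binVal {l : List (ℤ × ℕ)} {m : ℕ} (h : ∀ p ∈ l, m ≤ p.2) :
    (2 : ℤ) ^ m ∣ binVal l :=
  List.dvd_sum <| List.forall_mem_map.2 fun p hp => Dvd.dvd.mul_left (pow_dvd_pow 2 (h p hp)) p.1

theorem exists_mem_snd_eq_zero_of_odd_binVal {l : List (ℤ × ℕ)} (h : Odd (binVal l)) :
    ∃ p ∈ l, p.2 = 0 := by
  by_contra! hpos
  have h_dvd : (2 : ℤ) ^ 1 ∣ binVal l :=
    two_pow_dvd_binVal fun p hp => Nat.one_le_iff_ne_zero.2 (hpos p hp)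
  exact Int.not_even_iff_odd.2 h (even_iff_two_dvd.2 (by simpa using h_dvd))

/-- `N` is the value of a binary sum with at most `k` terms. The sum need not be reduced, and
allowing fewer than `k` terms makes the notion monotone in `k`. -/
def HasBinSum (N : ℤ) (k : ℕ) : Prop :=
  ∃ l : List (ℤ × ℕ), GoodCoeffs l ∧ binVal l = N ∧ l.length ≤ k

namespace HasBinSum

variable {N M n ε : ℤ} {k : ℕ}

theorem mono {k' : ℕ} (h : HasBinSum N k) (hk : k ≤ k') : HasBinSum N k' :=
  let ⟨l, hl, hN, hlen⟩ := h
  ⟨l, hl, hN, hlen.trans hk⟩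

theorem add_term (h : HasBinSum N k) (hε : ε = 1 ∨ ε = -1) (q : ℕ) :
    HasBinSum (ε * 2 ^ q + N) (k + 1) := by
  obtain ⟨l, hl, rfl, hlen⟩ := h
  exact ⟨(ε, q) :: l, List.forall_mem_cons.2 ⟨hε, hl⟩, binVal_cons _ _, Nat.succ_le_succ hlen⟩

theorem of_abs_sub_two_mul_le_one (h : HasBinSum N k) (hM : |N - 2 * M| ≤ 1) :
    HasBinSum M k := by
  obtain ⟨l, hl, rfl, hlen⟩ := h
  suffices HasBinSum M l.length from this.mono hlen
  clear hlen
  induction l generalizing M with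
  | nil =>
    obtain rfl : M = 0 := by
      simp only [binVal, List.map_nil, List.sum_nil, abs_le] at hM
      omega
    exact ⟨[], hl, rfl, le_rfl⟩
  | cons p l ih =>
    obtain ⟨ε, q⟩ := p
    obtain ⟨hε, hl_tail⟩ : (ε = 1 ∨ ε = -1) ∧ GoodCoeffs l := List.forall_mem_cons.1 hl
    simp only [binVal_cons] at hM
    cases q with
    | zero =>
      -- A new term `±1` either only changes how the old value is rounded, or is kept in the half.
      by_cases h_near : |binVal l - 2 * M| ≤ 1
      · exact (ih hl_tail h_near).mono (Nat.le_succ _)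
      · have h_rest : binVal l = 2 * (M - ε) := by
          rw [abs_le] at hM h_near
          omega
        have h_sum : HasBinSum (M - ε) l.length := ih hl_tail (by simp [h_rest])
        simpa using h_sum.add_term hε 0
    | succ q =>
      have h_sum : HasBinSum (M - ε * 2 ^ q) l.length := by
        refine ih hl_tail ?_
        convert hM using 2
        ring
      simpa using h_sum.add_term hε q

protected theorem two_mul (h : HasBinSum N k) : HasBinSum (2 * N) k := by
  obtain ⟨l, hl, rfl, hlen⟩ := h
  refine ⟨l.map fun p => (p.1, p.2 + 1), List.forall_mem_map.2 fun p hp => hl p hp, ?_,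
    by simpa using hlen⟩
  simp only [binVal, List.map_map, ← List.sum_map_mul_left]
  congr 2
  ext p
  simp only [Function.comp_apply]
  ring

theorem two_mul_iff : HasBinSum (2 * N) k ↔ HasBinSum N k :=
  ⟨fun h => h.of_abs_sub_two_mul_le_one (by simp), HasBinSum.two_mul⟩

theorem two_pow_mul_iff (q : ℕ) : HasBinSum (2 ^ q * N) k ↔ HasBinSum N k := by
  induction q with
  | zero => simp
  | succ q ih => rw [pow_succ', mul_assoc, two_mul_iff, ih]

theorem exists_lt_sub_unit_of_odd (h : HasBinSum N k) (hN : Odd N) :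
    ∃ ε : ℤ, (ε = 1 ∨ ε = -1) ∧ ∃ k' < k, HasBinSum (N - ε) k' := by
  obtain ⟨l, hl, rfl, hlen⟩ := h
  obtain ⟨⟨ε, q⟩, hp, rfl : q = 0⟩ := exists_mem_snd_eq_zero_of_odd_binVal hN
  have h_val : ε * 2 ^ 0 + binVal (l.erase (ε, 0)) = binVal l := add_binVal_erase hp
  have h_len : (l.erase (ε, 0)).length + 1 = l.length := List.length_erase_add_one hp
  refine ⟨ε, hl _ hp, _, by omega, l.erase (ε, 0), ?_, ?_, le_rfl⟩
  · exact fun p hp_erase => hl p (List.mem_of_mem_erase hp_erase)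
  · linarith

theorem exists_lt_of_four_mul_add_unit (h : HasBinSum (4 * n + ε) k) (hε : ε = 1 ∨ ε = -1) :
    ∃ k' < k, HasBinSum n k' := by
  have h_odd : Odd (4 * n + ε) := Int.odd_iff.2 (by omega)
  obtain ⟨δ, hδ, k', hk', h_rest⟩ := h.exists_lt_sub_unit_of_odd h_odd
  obtain ⟨m, h_double, h_near⟩ : ∃ m, 4 * n + ε - δ = 2 * m ∧ |m - 2 * n| ≤ 1 :=
    ⟨2 * n + (ε - δ) / 2, by omega, by rw [abs_le]; omega⟩
  rw [h_double, two_mul_iff] at h_rest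
  exact ⟨k', hk', h_rest.of_abs_sub_two_mul_le_one h_near⟩

end HasBinSum

namespace Compact

variable {c : List (ℤ × ℕ)}

theorem pairwise (hc : Compact c) : c.Pairwise fun a b => b.2 + 2 ≤ a.2 :=
  haveI : IsTrans (ℤ × ℕ) fun a b => b.2 + 2 ≤ a.2 := ⟨fun _ _ _ _ _ => by omega⟩
  List.isChain_iff_pairwise.1 hc

theorem length_le_of_hasBinSum {k : ℕ} (hc : Compact c) (hg : GoodCoeffs c)
    (h : HasBinSum (binVal c) k) : c.length ≤ k := by
  induction c using List.reverseRecOn generalizing k with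
  | nil => exact Nat.zero_le k
  | append_singleton c p ih =>
    obtain ⟨ε, q⟩ := p
    obtain ⟨hg', hε⟩ : GoodCoeffs c ∧ (ε = 1 ∨ ε = -1) := by
      simpa [GoodCoeffs, or_imp, forall_and] using hg
    obtain ⟨n, hn⟩ : (2 : ℤ) ^ (q + 2) ∣ binVal c :=
      two_pow_dvd_binVal fun a ha => (List.pairwise_append.1 hc.pairwise).2.2 a ha (ε, q) (by simp)
    have h_val : binVal (c ++ [(ε, q)]) = 2 ^ q * (4 * n + ε) := by
      rw [binVal_concat, hn]
      ring
    rw [h_val, HasBinSum.two_pow_mul_iff] at h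
    obtain ⟨k', hk', h'⟩ := h.exists_lt_of_four_mul_add_unit hε
    have h_len : c.length ≤ k' :=
      ih (List.isChain_append.1 hc).1 hg' (hn ▸ (HasBinSum.two_pow_mul_iff (q + 2)).2 h')
    simpa using h_len.trans_lt hk'

theorem length_le_of_binVal_eq {l : List (ℤ × ℕ)} (hc : Compact c) (hg : GoodCoeffs c)
    (hl : GoodCoeffs l) (h : binVal l = binVal c) : c.length ≤ l.length :=
  hc.length_le_of_hasBinSum hg ⟨l, hl, h, le_rfl⟩

end Compact

theorem three_mul_sum_two_pow_two_mul {R : Type*} [Ring R] (n : ℕ) :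
    3 * ∑ j ∈ Finset.range n, (2 : R) ^ (2 * j) = 4 ^ n - 1 := by
  have h_sub : (4 : R) - 1 = 3 := by norm_num
  have h_sq : (2 : R) ^ 2 = 4 := by norm_num
  simpa only [pow_mul, h_sub, h_sq] using mul_geom_sum (4 : R) n

theorem compact_map_range_two_mul_sub (ε : ℤ) (i : ℕ) :
    Compact ((List.range (i + 1)).map fun j => (ε, 2 * (i - j))) := by
  refine (List.isChain_map _).2 (List.isChain_iff_getElem.2 fun j hj => ?_)
  simp only [List.length_range, List.getElem_range] at hj ⊢
  omega

theorem binVal_map_range_two_mul_sub (ε : ℤ) (i : ℕ) :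
    binVal ((List.range (i + 1)).map fun j => (ε, 2 * (i - j))) =
      ε * ∑ j ∈ Finset.range (i + 1), 2 ^ (2 * j) := by
  rw [← Finset.sum_range_reflect, Finset.mul_sum, ← List.toFinset_range,
    List.sum_toFinset _ List.nodup_range]
  simp [binVal, Function.comp_def]

/-- `N_i = (4^(i+1) - 1)/3 = ∑_{j=0}^{i} 2^(2j)`; the binary sum
`2^(2i) + 2^(2(i-1)) + ⋯ + 2^0` is compact, and consequently every binary sum
with value `N_i` has at least `i + 1` terms. -/
theorem N_i_needs_many_terms (i : ℕ) :
    3 * (∑ j ∈ Finset.range (i + 1), (2 : ℤ) ^ (2 * j)) = 4 ^ (i + 1) - 1 ∧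
    Compact ((List.range (i + 1)).map fun j => ((1 : ℤ), 2 * (i - j))) ∧
    binVal ((List.range (i + 1)).map fun j => ((1 : ℤ), 2 * (i - j))) =
      ∑ j ∈ Finset.range (i + 1), (2 : ℤ) ^ (2 * j) ∧
    (∀ l : List (ℤ × ℕ), GoodCoeffs l →
      binVal l = ∑ j ∈ Finset.range (i + 1), (2 : ℤ) ^ (2 * j) →
      i + 1 ≤ l.length) := by
  have h_compact := compact_map_range_two_mul_sub 1 i
  have h_val := binVal_map_range_two_mul_sub 1 i
  rw [one_mul] at h_val
  refine ⟨three_mul_sum_two_pow_two_mul (i + 1), h_compact, h_val, fun l hl hlN => ?_⟩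
  have h_good : GoodCoeffs ((List.range (i + 1)).map fun j => ((1 : ℤ), 2 * (i - j))) :=
    List.forall_mem_map.2 fun _ _ => Or.inl rfl
  simpa using h_compact.length_le_of_binVal_eq h_good hl (hlN.trans h_val.symm)
end

section
/- For every n ≥ 4, every constant power circuit that properly represents the product ∏_{i=4}^{n} (tower(i−1) + 1) has at least 2^{n−3} vertices. -/
/-- A constant power circuit: a finite nonempty DAG without multiple edges, with
edge labels in `{-1, 1}`, a nonempty set `M` of marked vertices with signs
`ν : M → {-1, 1}`, together with its evaluation function `eval`, which satisfies
the defining recursion: `eval v = 0` if `v` has no outgoing edges, and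
`eval v = 2 ^ (∑ edges e = v→w, μ(e) · eval w)` otherwise.

Vertices are `Fin n`; `lab u v = 0` means there is no edge `u → v`, and
`lab u v = ±1` means there is an edge `u → v` labelled `±1` (this encodes both the
edge set and the labelling `μ`, and there are no multiple edges by construction).
Acyclicity is expressed by well-foundedness of the child relation, which also makes
`eval` the unique function satisfying `evalSpec`. -/
structure PowerCircuit where
  n : ℕ
  npos : 0 < n
  lab : Fin n → Fin n → ℤ
  labValid : ∀ u v, lab u v = 0 ∨ lab u v = 1 ∨ lab u v = -1
  acyclic : WellFounded (fun u v : Fin n => lab v u ≠ 0)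
  M : Finset (Fin n)
  Mne : M.Nonempty
  nu : Fin n → ℤ
  nuValid : ∀ v ∈ M, nu v = 1 ∨ nu v = -1
  eval : Fin n → ℝ
  evalSpec : ∀ v, eval v =
    if ∀ w, lab v w = 0 then 0
    else (2 : ℝ) ^ (∑ w, (lab v w : ℝ) * eval w)

namespace PowerCircuit

/-- The value `ℰ(P) = ∑_{v ∈ M} ν(v) · ℰ(v)` of a constant power circuit. -/
noncomputable def value (P : PowerCircuit) : ℝ :=
  ∑ v ∈ P.M, (P.nu v : ℝ) * P.eval v

/-- A circuit is proper if every vertex evaluates to a natural number. -/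
def Proper (P : PowerCircuit) : Prop := ∀ v, ∃ m : ℕ, P.eval v = m

/-- `P` properly represents the integer `N`. -/
def Represents (P : PowerCircuit) (N : ℤ) : Prop := P.Proper ∧ P.value = N

/-- A zero vertex: a vertex with no outgoing edges. -/
def IsZeroVertex (P : PowerCircuit) (v : Fin P.n) : Prop := ∀ w, P.lab v w = 0

/-- The trivial circuit consists of a single (marked) vertex. -/
def Trivial (P : PowerCircuit) : Prop := P.n = 1

/-- Trimmed: every vertex is reachable from a marked vertex along a directed path. -/
def Trimmed (P : PowerCircuit) : Prop :=
  ∀ v, ∃ m ∈ P.M, Relation.ReflTransGen (fun a b => P.lab a b ≠ 0) m v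

/-- Standard form: trimmed, exactly one zero vertex, the zero vertex is unmarked
unless the circuit is trivial, and no vertex with more than one outgoing edge has
an edge into the zero vertex. -/
def StandardForm (P : PowerCircuit) : Prop :=
  P.Trimmed ∧
  (∃! z, P.IsZeroVertex z) ∧
  (P.Trivial ∨ ∀ z, P.IsZeroVertex z → z ∉ P.M) ∧
  (∀ v z, P.IsZeroVertex z → P.lab v z ≠ 0 → ∀ w, P.lab v w ≠ 0 → w = z)

/-- No redundant pair of edges: no two distinct edges `v → v₁`, `v → v₂` with
opposite labels and `ℰ(v₁) = ℰ(v₂)`. -/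
def NoRedundantPairs (P : PowerCircuit) : Prop :=
  ∀ v v₁ v₂ : Fin P.n, v₁ ≠ v₂ → P.lab v v₁ ≠ 0 → P.lab v v₂ ≠ 0 →
    P.lab v v₁ = -P.lab v v₂ → P.eval v₁ ≠ P.eval v₂

/-- No superfluous pair of edges: no two distinct edges `v → v₁`, `v → v₂` with
opposite labels and `ℰ(v₁) = 2 ℰ(v₂)`. -/
def NoSuperfluousPairs (P : PowerCircuit) : Prop :=
  ∀ v v₁ v₂ : Fin P.n, v₁ ≠ v₂ → P.lab v v₁ ≠ 0 → P.lab v v₂ ≠ 0 →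
    P.lab v v₁ = -P.lab v v₂ → P.eval v₁ ≠ 2 * P.eval v₂

/-- Reduced: standard form, distinct vertices have distinct evaluations, and no
redundant or superfluous pairs of edges. -/
def Reduced (P : PowerCircuit) : Prop :=
  P.StandardForm ∧ (∀ v₁ v₂ : Fin P.n, P.eval v₁ = P.eval v₂ → v₁ = v₂) ∧
  P.NoRedundantPairs ∧ P.NoSuperfluousPairs

/-- Normal form: proper and reduced; for every vertex all of whose out-edges lead
to non-zero vertices, the numbers `log₂ ℰ(β(e))` pairwise differ by at least `2`;
and, unless the circuit is trivial, the numbers `log₂ ℰ(v)`, `v ∈ M`, pairwise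
differ by at least `2`. -/
def NormalForm (P : PowerCircuit) : Prop :=
  P.Proper ∧ P.Reduced ∧
  (∀ v : Fin P.n, (∀ w, P.lab v w ≠ 0 → ¬P.IsZeroVertex w) →
    ∀ w₁ w₂, P.lab v w₁ ≠ 0 → P.lab v w₂ ≠ 0 → w₁ ≠ w₂ →
      2 ≤ |Real.logb 2 (P.eval w₁) - Real.logb 2 (P.eval w₂)|) ∧
  (P.Trivial ∨ ∀ v₁ ∈ P.M, ∀ v₂ ∈ P.M, v₁ ≠ v₂ →
      2 ≤ |Real.logb 2 (P.eval v₁) - Real.logb 2 (P.eval v₂)|)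

/-- Isomorphism of constant power circuits: a bijection of vertices preserving
edges with their labels, marked vertices, and the signs of marked vertices. -/
def Isomorphic (P Q : PowerCircuit) : Prop :=
  ∃ φ : Fin P.n ≃ Fin Q.n,
    (∀ u v, Q.lab (φ u) (φ v) = P.lab u v) ∧
    (∀ v, φ v ∈ Q.M ↔ v ∈ P.M) ∧
    (∀ v ∈ P.M, Q.nu (φ v) = P.nu v)

/-- The number of edges of a power circuit. -/
def edgeCount (P : PowerCircuit) : ℕ :=
  (Finset.univ.filter fun p : Fin P.n × Fin P.n => P.lab p.1 p.2 ≠ 0).card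

end PowerCircuit

/-- The tower function: `tower 1 = 2` and `tower (j+1) = 2 ^ tower j`
(so `tower j` is a tower of `j` twos). -/
def tower : ℕ → ℕ
  | 0 => 1
  | j + 1 => 2 ^ tower j

/-!
A marked vertex of a proper circuit evaluates to zero or to a power of two, so a circuit with `k`
marked vertices represents a sum of at most `k` signed powers of two. The number of nonzero digits
of the non-adjacent form of an integer changes by at most one when a power of two is added, hence it
is a lower bound for `k`. In the tower product the factors `2 ^ e + 1` have exponents so far apart
that each multiplication places two copies of the digits of the previous product side by side
without interference, doubling the number of nonzero digits.
-/

/-- The number of nonzero digits in the non-adjacent form of an integer, its unique expansion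
`∑ dᵢ 2 ^ i` with `dᵢ ∈ {-1, 0, 1}` and no two consecutive nonzero digits. The digits are read from
the lowest one on: an odd `N` has last digit `d = ±1` with `N ≡ d [ZMOD 4]`, preceded by a `0`. -/
def nafWeight (N : ℤ) : ℕ :=
  if N = 0 then 0
  else if N % 2 = 0 then nafWeight (N / 2)
  else if N % 4 = 1 then nafWeight (N / 4) + 1
  else nafWeight (N / 4 + 1) + 1
termination_by N.natAbs

@[simp]
theorem nafWeight_zero : nafWeight 0 = 0 := by
  rw [nafWeight, if_pos rfl]

theorem nafWeight_two_mul (N : ℤ) : nafWeight (2 * N) = nafWeight N := by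
  rcases eq_or_ne N 0 with rfl | hN
  · rfl
  · rw [nafWeight, if_neg (by omega), if_pos (by omega)]
    congr 1
    omega

theorem nafWeight_four_mul_add_one (N : ℤ) : nafWeight (4 * N + 1) = nafWeight N + 1 := by
  rw [nafWeight, if_neg (by omega), if_neg (by omega), if_pos (by omega)]
  congr 2
  omega

theorem nafWeight_four_mul_add_three (N : ℤ) :
    nafWeight (4 * N + 3) = nafWeight (N + 1) + 1 := by
  rw [nafWeight, if_neg (by omega), if_neg (by omega), if_neg (by omega)]
  congr 2
  omega

theorem nafWeight_one : nafWeight 1 = 1 := by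
  simpa using nafWeight_four_mul_add_one 0

theorem nafWeight_neg_one : nafWeight (-1) = 1 := by
  simpa using nafWeight_four_mul_add_three (-1)

theorem exists_eq_two_mul_or_four_mul_add (N : ℤ) :
    ∃ K, N = 2 * K ∨ N = 4 * K + 1 ∨ N = 4 * K + 3 := by
  rcases Int.emod_two_eq_zero_or_one N with h | h
  · exact ⟨N / 2, by omega⟩
  · exact ⟨N / 4, by omega⟩

-- The two bounds are proved together: the induction step for each uses the other.
theorem nafWeight_two_mul_add_one_bounds (N : ℤ) :
    max (nafWeight N) (nafWeight (N + 1)) ≤ nafWeight (2 * N + 1) ∧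
      nafWeight (2 * N + 1) ≤ min (nafWeight N) (nafWeight (N + 1)) + 1 := by
  rcases eq_or_ne N 0 with rfl | hzero
  · simp [nafWeight_one]
  rcases eq_or_ne N (-1) with rfl | hneg
  · simp [nafWeight_neg_one]
  obtain ⟨K, rfl | rfl⟩ := Int.even_or_odd' N
  · have ih := nafWeight_two_mul_add_one_bounds K
    rw [← mul_assoc, show (2 * 2 : ℤ) = 4 from rfl, nafWeight_four_mul_add_one, nafWeight_two_mul]
    omega
  · have ih := nafWeight_two_mul_add_one_bounds K
    rw [show 2 * (2 * K + 1) + 1 = 4 * K + 3 by ring, nafWeight_four_mul_add_three,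
      show 2 * K + 1 + 1 = 2 * (K + 1) by ring, nafWeight_two_mul]
    omega
termination_by N.natAbs

theorem nafWeight_add_one_bounds (N : ℤ) :
    nafWeight (N + 1) ≤ nafWeight N + 1 ∧ nafWeight N ≤ nafWeight (N + 1) + 1 := by
  have := nafWeight_two_mul_add_one_bounds N
  omega

theorem nafWeight_add_two_bounds (N : ℤ) :
    nafWeight (N + 2) ≤ nafWeight N + 1 ∧ nafWeight N ≤ nafWeight (N + 2) + 1 := by
  obtain ⟨K, rfl | rfl | rfl⟩ := exists_eq_two_mul_or_four_mul_add N
  · rw [show 2 * K + 2 = 2 * (K + 1) by ring, nafWeight_two_mul, nafWeight_two_mul]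
    exact nafWeight_add_one_bounds K
  · rw [show 4 * K + 1 + 2 = 4 * K + 3 by ring, nafWeight_four_mul_add_one,
      nafWeight_four_mul_add_three]
    have := nafWeight_add_one_bounds K
    omega
  · rw [show 4 * K + 3 + 2 = 4 * (K + 1) + 1 by ring, nafWeight_four_mul_add_one,
      nafWeight_four_mul_add_three]
    omega

theorem nafWeight_add_two_pow_bounds : ∀ (N : ℤ) (a : ℕ),
    nafWeight (N + 2 ^ a) ≤ nafWeight N + 1 ∧ nafWeight N ≤ nafWeight (N + 2 ^ a) + 1
  | N, 0 => by simpa using nafWeight_add_one_bounds N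
  | N, 1 => by simpa using nafWeight_add_two_bounds N
  | N, a + 2 => by
    obtain ⟨K, rfl | rfl | rfl⟩ := exists_eq_two_mul_or_four_mul_add N
    · rw [show 2 * K + 2 ^ (a + 2) = 2 * (K + 2 ^ (a + 1)) by ring, nafWeight_two_mul,
        nafWeight_two_mul]
      exact nafWeight_add_two_pow_bounds K (a + 1)
    · rw [show 4 * K + 1 + 2 ^ (a + 2) = 4 * (K + 2 ^ a) + 1 by ring, nafWeight_four_mul_add_one,
        nafWeight_four_mul_add_one]
      have := nafWeight_add_two_pow_bounds K a
      omega
    · rw [show 4 * K + 3 + 2 ^ (a + 2) = 4 * (K + 2 ^ a) + 3 by ring,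
        nafWeight_four_mul_add_three, nafWeight_four_mul_add_three, add_right_comm K]
      have := nafWeight_add_two_pow_bounds (K + 1) a
      omega

theorem nafWeight_sum_le_card {ι : Type*} (s : Finset ι) (f : ι → ℤ)
    (hf : ∀ i ∈ s, f i = 0 ∨ ∃ a : ℕ, |f i| = 2 ^ a) : nafWeight (∑ i ∈ s, f i) ≤ s.card := by
  induction s using Finset.cons_induction with
  | empty => simp
  | cons i s hi ih =>
    rw [Finset.forall_mem_cons] at hf
    rw [Finset.sum_cons, Finset.card_cons, add_comm]
    refine le_trans ?_ (Nat.add_le_add_right (ih hf.2) 1)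
    rcases hf.1 with hzero | ⟨a, ha⟩
    · simp [hzero]
    rcases (abs_eq (by positivity)).1 ha with hpos | hneg
    · rw [hpos]
      exact (nafWeight_add_two_pow_bounds _ a).1
    · rw [hneg]
      simpa using (nafWeight_add_two_pow_bounds (∑ i ∈ s, f i + -2 ^ a) a).2

-- The condition says that the non-adjacent form of `x` has no nonzero digit from position `l - 1`
-- on, so its concatenation with that of `y` is again non-adjacent.
theorem nafWeight_add_two_pow_mul {x : ℤ} {l : ℕ} (hx : 3 * |x| ≤ 2 ^ l) (y : ℤ) :
    nafWeight (x + 2 ^ l * y) = nafWeight x + nafWeight y := by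
  induction l using Nat.twoStepInduction generalizing x with
  | zero =>
    obtain rfl : x = 0 := by grind
    simp
  | one =>
    obtain rfl : x = 0 := by grind
    simp [nafWeight_two_mul]
  | more l ih_l ih_succ =>
    obtain ⟨K, rfl | rfl | rfl⟩ := exists_eq_two_mul_or_four_mul_add x
    · have hK : 3 * |K| ≤ 2 ^ (l + 1) := by grind
      rw [show 2 * K + 2 ^ (l + 2) * y = 2 * (K + 2 ^ (l + 1) * y) by ring, nafWeight_two_mul,
        nafWeight_two_mul, ih_succ hK]
    · have hK : 3 * |K| ≤ 2 ^ l := by grind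
      rw [show 4 * K + 1 + 2 ^ (l + 2) * y = 4 * (K + 2 ^ l * y) + 1 by ring,
        nafWeight_four_mul_add_one, nafWeight_four_mul_add_one, ih_l hK, add_right_comm]
    · have hK : 3 * |K + 1| ≤ 2 ^ l := by grind
      rw [show 4 * K + 3 + 2 ^ (l + 2) * y = 4 * (K + 2 ^ l * y) + 3 by ring,
        nafWeight_four_mul_add_three, nafWeight_four_mul_add_three, add_right_comm K,
        ih_l hK, add_right_comm]

theorem three_mul_prod_two_pow_add_one_lt {e : ℕ → ℕ} (h0 : 2 ≤ e 0)
    (he : ∀ k, 2 * e k ≤ e (k + 1)) (d : ℕ) :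
    3 * ∏ k ∈ Finset.range d, ((2 : ℤ) ^ e k + 1) < 2 ^ e d := by
  induction d with
  | zero =>
    calc (3 * ∏ k ∈ Finset.range 0, ((2 : ℤ) ^ e k + 1)) < 2 ^ 2 := by norm_num
      _ ≤ 2 ^ e 0 := pow_le_pow_right₀ (by norm_num) h0
  | succ d ih =>
    calc 3 * ∏ k ∈ Finset.range (d + 1), ((2 : ℤ) ^ e k + 1)
        = (3 * ∏ k ∈ Finset.range d, ((2 : ℤ) ^ e k + 1)) * (2 ^ e d + 1) := by
          rw [Finset.prod_range_succ, mul_assoc]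
      _ ≤ (2 ^ e d - 1) * (2 ^ e d + 1) := by gcongr; omega
      _ < 2 ^ (2 * e d) := by rw [two_mul, pow_add]; linarith
      _ ≤ 2 ^ e (d + 1) := pow_le_pow_right₀ (by norm_num) (he d)

theorem nafWeight_prod_two_pow_add_one {e : ℕ → ℕ} (h0 : 2 ≤ e 0)
    (he : ∀ k, 2 * e k ≤ e (k + 1)) (d : ℕ) :
    nafWeight (∏ k ∈ Finset.range d, (2 ^ e k + 1)) = 2 ^ d := by
  induction d with
  | zero => simpa using nafWeight_one
  | succ d ih =>
    set p : ℤ := ∏ k ∈ Finset.range d, (2 ^ e k + 1) with hp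
    have small : 3 * |p| ≤ 2 ^ e d := by
      rw [abs_of_nonneg (Finset.prod_nonneg fun k _ => by positivity)]
      exact (three_mul_prod_two_pow_add_one_lt h0 he d).le
    rw [Finset.prod_range_succ, ← hp, mul_add_one, add_comm, mul_comm,
      nafWeight_add_two_pow_mul small, ih, pow_succ, mul_two]

theorem two_mul_tower_le_tower_succ : ∀ k, 2 * tower k ≤ tower (k + 1)
  | 0 => le_rfl
  | k + 1 => by
    change 2 * 2 ^ tower k ≤ 2 ^ 2 ^ tower k
    rw [← pow_succ']
    exact Nat.pow_le_pow_right two_pos Nat.lt_two_pow_self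

theorem nafWeight_prod_tower_add_one (n : ℕ) :
    nafWeight (∏ i ∈ Finset.Icc 4 n, ((tower (i - 1) : ℤ) + 1)) = 2 ^ (n - 3) := by
  have reindex : ∏ i ∈ Finset.Icc 4 n, ((tower (i - 1) : ℤ) + 1) =
      ∏ k ∈ Finset.range (n - 3), (2 ^ tower (k + 2) + 1) := by
    rw [← Finset.Ico_add_one_right_eq_Icc, Finset.prod_Ico_eq_prod_range,
      show n + 1 - 4 = n - 3 by omega]
    refine Finset.prod_congr rfl fun k _ => ?_
    rw [show 4 + k - 1 = (k + 2) + 1 by omega, tower]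
    push_cast
    rfl
  rw [reindex]
  exact nafWeight_prod_two_pow_add_one (by decide) (fun k => two_mul_tower_le_tower_succ (k + 2)) _

namespace PowerCircuit

variable {P : PowerCircuit}

theorem Proper.eval_eq_zero_or_two_pow (hP : P.Proper) (v : Fin P.n) :
    P.eval v = 0 ∨ ∃ a : ℕ, P.eval v = 2 ^ a := by
  have hs := P.evalSpec v
  split_ifs at hs
  · exact Or.inl hs
  right
  choose m hm using hP
  obtain ⟨z, hz⟩ : ∃ z : ℤ, P.eval v = 2 ^ z := by
    refine ⟨∑ w, P.lab v w * (m w : ℤ), ?_⟩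
    rw [hs, ← Real.rpow_intCast]
    simp only [hm, Int.cast_sum, Int.cast_mul, Int.cast_natCast]
  have one_le : (1 : ℝ) ≤ 2 ^ z := by
    have pos : (0 : ℝ) < m v := by
      rw [← hm, hz]
      positivity
    rw [← hz, hm]
    exact_mod_cast pos
  lift z to ℕ using (one_le_zpow_iff_right₀ one_lt_two).1 one_le
  exact ⟨z, by rw [hz, zpow_natCast]⟩

theorem Proper.nafWeight_le_card_marked (hP : P.Proper) {N : ℤ} (hN : P.value = N) :
    nafWeight N ≤ P.M.card := by
  obtain ⟨m, hm⟩ := Classical.skolem.1 hP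
  have sum_eq : N = ∑ v ∈ P.M, P.nu v * (m v : ℤ) := by
    have : (N : ℝ) = ∑ v ∈ P.M, (P.nu v : ℝ) * m v := by
      simp only [← hN, value, hm]
    exact_mod_cast this
  rw [sum_eq]
  refine nafWeight_sum_le_card _ _ fun v hv => ?_
  rcases hP.eval_eq_zero_or_two_pow v with hzero | ⟨a, ha⟩
  · left
    have : m v = 0 := by exact_mod_cast (hm v).symm.trans hzero
    simp [this]
  · right
    have m_eq : (m v : ℤ) = 2 ^ a := by exact_mod_cast (hm v).symm.trans ha
    have abs_nu : |P.nu v| = 1 := (abs_eq one_pos.le).2 (P.nuValid v hv)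
    exact ⟨a, by rw [abs_mul, abs_nu, one_mul, m_eq, abs_of_pos (by positivity)]⟩

end PowerCircuit

/-- For every `n ≥ 4`, every constant power circuit properly representing the
product `∏_{i=4}^{n} (tower (i-1) + 1)` has at least `2^(n-3)` vertices. -/
theorem circuit_for_tower_product_has_many_vertices (n : ℕ) (hn : 4 ≤ n)
    (P : PowerCircuit) (hP : P.Proper)
    (hval : P.value = ∏ i ∈ Finset.Icc 4 n, ((tower (i - 1) : ℝ) + 1)) :
    2 ^ (n - 3) ≤ P.n := by
  have value_eq : P.value = (∏ i ∈ Finset.Icc 4 n, ((tower (i - 1) : ℤ) + 1) : ℤ) := by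
    rw [hval]
    push_cast
    rfl
  calc 2 ^ (n - 3) = nafWeight (∏ i ∈ Finset.Icc 4 n, ((tower (i - 1) : ℤ) + 1)) :=
        (nafWeight_prod_tower_add_one n).symm
    _ ≤ P.M.card := hP.nafWeight_le_card_marked value_eq
    _ ≤ P.n := card_finset_fin_le P.M
end
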